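/- arXiv:2510.27387 — 3 statements merged into one kernel-verified Lean document; each statement's English description precedes it below -/
import Mathlib

section
/- Let K be a field, let V_1, ..., V_d, W be finite-dimensional vector spaces over K with m := min{dim V_i : 1 ≤ i ≤ d}, and let F : V_1 × ... × V_d → W be a nonzero multilinear map. Then m ≤ PR(T_F)·(α(F)+1)^{d-1} + α(F) + 1. -/
/-!
Put `s = α(F) + 1` and write `F = ∑ⱼ fⱼ ⊗ Gⱼ` with `r = PR(T_F)` summands, the form `fⱼ`
depending on the coordinates in a nonempty set `Eⱼ`. It suffices to find `s`-dimensional subspaces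
`Uᵢ ⊆ Vᵢ` on which every `fⱼ` vanishes, since `F` then vanishes on `U₁ × ⋯ × U_d`, contradicting
the maximality of `α(F)`. Bases `bᵢ` of the `Uᵢ` are chosen one index at a time
(`exists_isotropic_families`): when index `k` is reached, the basis `bₖ` takes care of all `j` with
`max Eⱼ = k`. For each such `j`, substituting basis vectors into the other coordinates gives at most
`s ^ (d - 1)` linear forms on `Vₖ`, so `bₖ` has to be found in a subspace of codimension at most
`r * s ^ (d - 1)`. This is possible as soon as `r * s ^ (d - 1) + s ≤ min dim Vᵢ`, so the failure of
the asserted inequality is more than enough.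
-/

open Module

section Defs

variable {K : Type} [Field K] {d : ℕ} {V : Fin d → Type} {W : Type}
  [∀ i, AddCommGroup (V i)] [∀ i, Module K (V i)]
  [AddCommGroup W] [Module K W]

/-- The isotropy index `α(F)` of a multilinear map `F : V₁ × ⋯ × V_d → W`: the largest `s`
such that there are subspaces `Uᵢ ⊆ Vᵢ`, all of dimension `s`, with `F` vanishing identically
on `U₁ × ⋯ × U_d`. -/
noncomputable def isoIndex (F : MultilinearMap K V W) : ℕ :=
  sSup {s : ℕ | ∃ U : ∀ i, Submodule K (V i),
    (∀ i, Module.finrank K (U i) = s) ∧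
    ∀ v : ∀ i, V i, (∀ i, v i ∈ U i) → F v = 0}

/-- `F : V₁ × ⋯ × V_d → W` corresponds (under the canonical isomorphism
`Hom(V₁ × ⋯ × V_d, W) ≅ V₁* ⊗ ⋯ ⊗ V_d* ⊗ W`) to a tensor `T_F` of partition rank one:
the tensor factors, along a nontrivial partition of the `d+1` factors, as `S₁ ⊗ S₂`.
Equivalently (for finite-dimensional spaces), there is a nonempty set `E` of input indices
such that `F v = f (v|_E) • G (v|_{Eᶜ})` for a multilinear form `f` on the `E`-coordinates
and a multilinear map `G` on the remaining coordinates. -/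
def IsPartitionRankOneMap (F : MultilinearMap K V W) : Prop :=
  ∃ E : Finset (Fin d), E.Nonempty ∧
    ∃ (f : MultilinearMap K (fun i : ↥E => V i.val) K)
      (G : MultilinearMap K (fun i : ↥(Eᶜ : Finset (Fin d)) => V i.val) W),
      ∀ v : ∀ i, V i, F v = f (fun i => v i.val) • G (fun i => v i.val)

/-- The partition rank `PR(T_F)` of the tensor `T_F ∈ V₁* ⊗ ⋯ ⊗ V_d* ⊗ W` corresponding to a
multilinear map `F`: the least `r` such that `F` is a sum of `r` maps whose corresponding
tensors have partition rank one. -/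
noncomputable def mapPartitionRank (F : MultilinearMap K V W) : ℕ :=
  sInf {r : ℕ | ∃ c : Fin r → MultilinearMap K V W,
    (∀ j, IsPartitionRankOneMap (c j)) ∧ F = ∑ j, c j}

end Defs

theorem MultilinearMap.eq_zero_of_mem_span {K ι : Type} [Field K] [Fintype ι] [DecidableEq ι]
    {V : ι → Type} {W : Type} [∀ i, AddCommGroup (V i)] [∀ i, Module K (V i)]
    [AddCommGroup W] [Module K W] (F : MultilinearMap K V W) (S : ∀ i, Set (V i))
    (hS : ∀ v : ∀ i, V i, (∀ i, v i ∈ S i) → F v = 0)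
    (v : ∀ i, V i) (hv : ∀ i, v i ∈ Submodule.span K (S i)) : F v = 0 := by
  -- Coordinates are moved from `S i` to its span one at a time; `T` holds those already moved.
  suffices H : ∀ T : Finset ι, ∀ v : ∀ i, V i, (∀ i ∈ T, v i ∈ Submodule.span K (S i)) →
      (∀ i ∉ T, v i ∈ S i) → F v = 0 from
    H Finset.univ v (fun i _ => hv i) (fun i hi => absurd (Finset.mem_univ i) hi)
  intro T
  induction T using Finset.induction_on with
  | empty => exact fun v _ h => hS v fun i => h i (Finset.notMem_empty i)
  | insert a T ha ih =>
    intro v h1 h2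
    have key : Submodule.span K (S a) ≤ LinearMap.ker (F.toLinearMap v a) := by
      rw [Submodule.span_le]
      intro x hx
      simp only [SetLike.mem_coe, LinearMap.mem_ker, MultilinearMap.toLinearMap_apply]
      apply ih
      · intro i hi
        have hia : i ≠ a := fun h => ha (h ▸ hi)
        rw [Function.update_of_ne hia]
        exact h1 i (Finset.mem_insert_of_mem hi)
      · intro i hi
        by_cases hia : i = a
        · subst hia
          simpa using hx
        · rw [Function.update_of_ne hia]
          exact h2 i (by simp [hia, hi])
    have := key (h1 a (Finset.mem_insert_self a T))
    simpa using this

theorem exists_linearIndependent_mem_ker {K X Y : Type} [Field K] [AddCommGroup X] [Module K X]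
    [FiniteDimensional K X] [AddCommGroup Y] [Module K Y] [FiniteDimensional K Y]
    (L : X →ₗ[K] Y) {s : ℕ} (h : Module.finrank K Y + s ≤ Module.finrank K X) :
    ∃ c : Fin s → X, LinearIndependent K c ∧ ∀ a, L (c a) = 0 := by
  have h1 := L.finrank_range_add_finrank_ker
  have h2 := Submodule.finrank_le (LinearMap.range L)
  obtain ⟨c, hc⟩ := exists_linearIndependent_of_le_finrank
    (R := K) (M := LinearMap.ker L) (n := s) (by omega)
  exact ⟨fun a => (c a : X), hc.map' (LinearMap.ker L).subtype (Submodule.ker_subtype _),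
    fun a => (c a).2⟩

/-- The greedy choice. After `k` steps, `b i` is linearly independent for every `i`, and every form
`f j` whose coordinates are all among the first `k` vanishes on tuples of vectors of the `b i`. -/
theorem exists_isotropic_families {K : Type} [Field K] {d : ℕ} {V : Fin d → Type}
    [∀ i, AddCommGroup (V i)] [∀ i, Module K (V i)] [∀ i, FiniteDimensional K (V i)]
    {r s : ℕ} (E : Fin r → Finset (Fin d)) (hE : ∀ j, (E j).Nonempty)
    (f : ∀ j, MultilinearMap K (fun i : ↥(E j) => V i.val) K)
    (hs : ∀ i, r * s ^ (d - 1) + s ≤ Module.finrank K (V i)) (k : ℕ) (hk : k ≤ d) :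
    ∃ b : ∀ i, Fin s → V i, (∀ i, LinearIndependent K (b i)) ∧
      ∀ j, (∀ i ∈ E j, i.val < k) → ∀ t : Fin d → Fin s, f j (fun i => b i (t i)) = 0 := by
  induction k with
  | zero =>
    have h0 : ∀ i, ∃ c : Fin s → V i, LinearIndependent K c := fun i =>
      exists_linearIndependent_of_le_finrank ((Nat.le_add_left _ _).trans (hs i))
    choose b hb using h0
    refine ⟨b, hb, fun j hj => ?_⟩
    obtain ⟨i, hi⟩ := hE j
    exact absurd (hj i hi) (Nat.not_lt_zero _)
  | succ k ih =>
    obtain ⟨b, hb, hf⟩ := ih (by omega)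
    let κ : Fin d := ⟨k, hk⟩
    -- The value at `κ` of this tuple is irrelevant: `toLinearMap` overwrites it.
    let u : ({i : Fin d // i ≠ κ} → Fin s) → ∀ i, V i := fun t i =>
      if h : i ≠ κ then b i (t ⟨i, h⟩) else 0
    let L : V κ →ₗ[K] (Fin r × ({i : Fin d // i ≠ κ} → Fin s) → K) :=
      LinearMap.pi fun p =>
        if h : κ ∈ E p.1 then (f p.1).toLinearMap (fun i => u p.2 i) ⟨κ, h⟩ else 0
    have hL : Module.finrank K (Fin r × ({i : Fin d // i ≠ κ} → Fin s) → K)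
        = r * s ^ (d - 1) := by
      simp [Fintype.card_subtype_compl]
    obtain ⟨c, hc, hcL⟩ := exists_linearIndependent_mem_ker L (s := s) (by rw [hL]; exact hs κ)
    refine ⟨Function.update b κ c, fun i => ?_, fun j hj t => ?_⟩
    · by_cases h : i = κ
      · subst h
        simpa using hc
      · simpa [Function.update_of_ne h] using hb i
    · by_cases h : κ ∈ E j
      · have h1 := congrFun (hcL (t κ)) (j, fun i => t i)
        simp only [L, LinearMap.pi_apply, h, dif_pos, MultilinearMap.toLinearMap_apply,
          Pi.zero_apply] at h1
        rw [← h1]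
        congr 1
        funext i
        by_cases hi : i = ⟨κ, h⟩
        · subst hi
          simp
        · have hi' : i.val ≠ κ := fun e => hi (Subtype.ext e)
          rw [Function.update_of_ne hi, Function.update_of_ne hi']
          simp [u, hi']
      · have hne : ∀ i ∈ E j, i ≠ κ := fun i hi e => h (e ▸ hi)
        rw [← hf j (fun i hi => ?_) t]
        · congr 1
          funext i
          rw [Function.update_of_ne (hne i i.2)]
        · have h1 := hj i hi
          have h2 : i.val ≠ k := fun e => hne i hi (Fin.ext e)
          omega

/-- The infimum defining the partition rank is attained. The set it ranges over is nonempty: expand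
`F` along a basis of `W` and split off the last factor of `V₁* ⊗ ⋯ ⊗ V_d* ⊗ W`. -/
theorem exists_mapPartitionRank_decomposition {K : Type} [Field K] {d : ℕ} (hd : 0 < d)
    {V : Fin d → Type} {W : Type}
    [∀ i, AddCommGroup (V i)] [∀ i, Module K (V i)]
    [AddCommGroup W] [Module K W] [FiniteDimensional K W] (F : MultilinearMap K V W) :
    ∃ c : Fin (mapPartitionRank F) → MultilinearMap K V W,
      (∀ j, IsPartitionRankOneMap (c j)) ∧ F = ∑ j, c j := by
  have hne : {r : ℕ | ∃ c : Fin r → MultilinearMap K V W,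
      (∀ j, IsPartitionRankOneMap (c j)) ∧ F = ∑ j, c j}.Nonempty := by
    let B := Module.finBasis K W
    let e : Fin d ≃ ↥(Finset.univ : Finset (Fin d)) :=
      (Equiv.subtypeUnivEquiv (fun i => Finset.mem_univ i)).symm
    refine ⟨Module.finrank K W, fun j =>
      ((LinearMap.toSpanSingleton K W (B j)).comp (B.coord j)).compMultilinearMap F,
      fun j => ?_, ?_⟩
    · have : IsEmpty ↥((Finset.univ : Finset (Fin d))ᶜ) :=
        ⟨fun x => Finset.mem_compl.mp x.2 (Finset.mem_univ _)⟩
      refine ⟨Finset.univ, ⟨⟨0, hd⟩, Finset.mem_univ _⟩,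
        MultilinearMap.domDomCongrLinearEquiv' K K V K e ((B.coord j).compMultilinearMap F),
        MultilinearMap.constOfIsEmpty K _ (B j), fun v => ?_⟩
      rfl
    · ext v
      simp
  exact Nat.sInf_mem hne

/-- **Bounds on the isotropy index, general case.**  If `F : V₁ × ⋯ × V_d → W` is a nonzero
multilinear map between finite-dimensional vector spaces over a field `K` and
`m = min ᵢ dim Vᵢ`, then `m ≤ PR(T_F)·(α(F)+1)^{d-1} + α(F) + 1`. -/
theorem isotropy_index_bound_general {K : Type} [Field K] {d : ℕ} (hd : 0 < d)
    (V : Fin d → Type) (W : Type)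
    [∀ i, AddCommGroup (V i)] [∀ i, Module K (V i)] [∀ i, FiniteDimensional K (V i)]
    [AddCommGroup W] [Module K W] [FiniteDimensional K W]
    (F : MultilinearMap K V W) (hF : F ≠ 0) :
    (⨅ i, Module.finrank K (V i)) ≤
      mapPartitionRank F * (isoIndex F + 1) ^ (d - 1) + isoIndex F + 1 := by
  by_contra hlt
  push Not at hlt
  obtain ⟨c, hc, hFc⟩ := exists_mapPartitionRank_decomposition hd F
  choose E hE f G hfG using hc
  have hs : ∀ i, mapPartitionRank F * (isoIndex F + 1) ^ (d - 1) + (isoIndex F + 1)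
      ≤ Module.finrank K (V i) := fun i => by
    have := ciInf_le (f := fun i => Module.finrank K (V i)) (OrderBot.bddBelow _) i
    omega
  obtain ⟨b, hb, hfb⟩ := exists_isotropic_families E hE f hs d le_rfl
  have hmem : isoIndex F + 1 ∈ {s : ℕ | ∃ U : ∀ i, Submodule K (V i),
      (∀ i, Module.finrank K (U i) = s) ∧
      ∀ v : ∀ i, V i, (∀ i, v i ∈ U i) → F v = 0} := by
    refine ⟨fun i => Submodule.span K (Set.range (b i)), fun i => ?_,
      F.eq_zero_of_mem_span _ fun v hv => ?_⟩
    · simpa using finrank_span_eq_card (hb i)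
    · choose t ht using hv
      obtain rfl : (fun i => b i (t i)) = v := funext ht
      rw [hFc, sum_apply]
      refine Finset.sum_eq_zero fun j _ => ?_
      rw [hfG, hfb j (fun i _ => i.2) t, zero_smul]
  have hbdd : BddAbove {s : ℕ | ∃ U : ∀ i, Submodule K (V i),
      (∀ i, Module.finrank K (U i) = s) ∧
      ∀ v : ∀ i, V i, (∀ i, v i ∈ U i) → F v = 0} := by
    refine ⟨Module.finrank K (V ⟨0, hd⟩), ?_⟩
    rintro s ⟨U, hU, -⟩
    rw [← hU ⟨0, hd⟩]
    exact Submodule.finrank_le _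
  exact absurd (le_csSup hbdd hmem) (Nat.not_succ_le_self _)
end

section
/- Let K be a field, let V and W be finite-dimensional vector spaces over K with m := dim V, and let F : V^d → W be a nonzero alternating multilinear map. Then m ≤ PR(T_F)·C(α_Λ(F), d-1) + α_Λ(F), where C(a,b) denotes the binomial coefficient 'a choose b'. -/
/-!
Put `r = PR(T_F)`, `α = α_Λ(F)` and write `F = ∑ j, f j ⊗ G j` with `r` summands, where the form
`f j` uses the nonempty set of positions `E j`. Suppose `dim V > r * C(α, d-1) + α`. The proof
builds `α + 1` independent vectors `u 0, …, u α` whose span is isotropic, which contradicts the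
definition of `α`.

As `F` is alternating, the span is isotropic once `F (u (a 0), …, u (a (d-1))) = 0` for all
`a 0 < ⋯ < a (d-1) ≤ α` (`alternating_eq_zero_on_span`), and for this it suffices that each `f j`
vanishes on such *increasing* tuples, restricted to `E j`. The forms `f j` need not be alternating,
but in an increasing tuple `u n` occurs only once, so if `u 0, …, u (n-1)` are already
chosen, the requirements on `u n` are linear. For a fixed `j`, let `e` be the largest element of
`E j` (positions being numbered from `0`). The requirements are indexed by the `e`-subsets
`{a 0, …, a (e-1)}` of `{0, …, n-1}`, and they occur only if the remaining `d-1-e` entries fit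
between `n` and `α`, that is, if `n + (d-1-e) ≤ α`. So their number is at most
`C(n, e) ≤ C(n + (d-1-e), d-1) ≤ C(α, d-1)`. Over all `j` this makes at most `r * C(α, d-1)` linear
equations, whose solution space has dimension `> α ≥ n`, and hence contains a vector outside the
span of `u 0, …, u (n-1)` (`exists_vanishing_sequence`).
-/

open Module

section Defs

variable {K : Type} [Field K] {d : ℕ} {V : Fin d → Type} {W : Type}
  [∀ i, AddCommGroup (V i)] [∀ i, Module K (V i)]
  [AddCommGroup W] [Module K W]

variable {V₀ : Type} [AddCommGroup V₀] [Module K V₀]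

/-- The isotropy index `α_Λ(F)` (resp. `α_S(F)`) of a multilinear map `F : V^d → W`:
the largest dimension of a subspace `U ⊆ V` such that `F` vanishes identically on `U^d`. -/
noncomputable def vanIndex (F : MultilinearMap K (fun _ : Fin d => V₀) W) : ℕ :=
  sSup {s : ℕ | ∃ U : Submodule K V₀, Module.finrank K U = s ∧
    ∀ v : Fin d → V₀, (∀ i, v i ∈ U) → F v = 0}

end Defs

theorem choose_le_choose_add (n e t : ℕ) : n.choose e ≤ (n + t).choose (e + t) := by
  induction t with
  | zero => simp
  | succ t ih =>
    refine ih.trans ?_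
    rw [← Nat.add_assoc, ← Nat.add_assoc, Nat.choose_succ_succ]
    exact Nat.le_add_right _ _

/-- A strictly increasing tuple is recovered from the set of its first `e` values: the initial
segment `(a i)_{i < e}` is the increasing enumeration of that set. -/
theorem nth_image_Iio {d : ℕ} {a : Fin d → ℕ} (ha : StrictMono a) {e i : Fin d} (hi : i < e) :
    Nat.nth (· ∈ (Finset.Iio e).image a) i = a i := by
  classical
  have hmem : a i ∈ (Finset.Iio e).image a :=
    Finset.mem_image_of_mem _ (Finset.mem_Iio.2 hi)
  have hcount : Nat.count (· ∈ (Finset.Iio e).image a) (a i) = i := by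
    rw [Nat.count_eq_card_filter_range]
    have : (Finset.range (a i)).filter (· ∈ (Finset.Iio e).image a)
        = (Finset.Iio i).image a := by
      ext x
      simp only [Finset.mem_filter, Finset.mem_range, Finset.mem_image, Finset.mem_Iio]
      constructor
      · rintro ⟨hx, k, hk, rfl⟩
        exact ⟨k, ha.lt_iff_lt.1 hx, rfl⟩
      · rintro ⟨k, hk, rfl⟩
        exact ⟨ha hk, k, hk.trans hi, rfl⟩
    rw [this, Finset.card_image_of_injective _ ha.injective, Fin.card_Iio]
  have h := Nat.nth_count (p := (· ∈ (Finset.Iio e).image a)) hmem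
  rwa [hcount] at h

theorem strictMono_add_le {d : ℕ} {a : Fin d → ℕ} (ha : StrictMono a) {e k : Fin d}
    (hek : e ≤ k) : a e + (k.1 - e.1) ≤ a k := by
  have key : ∀ t : ℕ, ∀ h : e.1 + t < d, a e + t ≤ a ⟨e.1 + t, h⟩ := by
    intro t
    induction t with
    | zero => intro h; simp
    | succ t ih =>
      intro h
      have h1 := ih (by omega)
      have h2 : a ⟨e.1 + t, by omega⟩ < a ⟨e.1 + (t + 1), h⟩ :=
        ha (by rw [Fin.lt_def]; simp)
      omega
  have hle : e.1 ≤ k.1 := hek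
  have := key (k.1 - e.1) (by omega)
  have hk : (⟨e.1 + (k.1 - e.1), by omega⟩ : Fin d) = k := Fin.ext (by simp; omega)
  rwa [hk] at this

theorem exists_vanishing_notMem {K V ι : Type} [Field K] [AddCommGroup V] [Module K V]
    [FiniteDimensional K V] [Fintype ι] (φ : ι → V →ₗ[K] K) (N : Submodule K V)
    (h : Fintype.card ι + finrank K N < finrank K V) : ∃ x, x ∉ N ∧ ∀ i, φ i x = 0 := by
  have h1 := (LinearMap.pi φ).finrank_range_add_finrank_ker
  have h2 : finrank K (LinearMap.range (LinearMap.pi φ)) ≤ Fintype.card ι := by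
    simpa using Submodule.finrank_le (LinearMap.range (LinearMap.pi φ))
  have h3 : ¬ LinearMap.ker (LinearMap.pi φ) ≤ N := fun hle => by
    have := Submodule.finrank_mono hle
    omega
  obtain ⟨x, hx, hxN⟩ := SetLike.not_le_iff_exists.1 h3
  exact ⟨x, hxN, fun i => congrFun (LinearMap.mem_ker.1 hx) i⟩

/-- The greedy construction. Given multilinear forms `f j` on the positions `E j ⊆ Fin d`, with
`dim V > r * C(α, d-1) + α`, there are `n ≤ α + 1` linearly independent vectors `u 0, …, u (n-1)`
such that `f j` vanishes at `(u (a i))_{i ∈ E j}` for every increasing tuple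
`a 0 < ⋯ < a (d-1) ≤ α` whose entries at the positions in `E j` are `< n`.

The sequence is a function on `ℕ` whose values from `n` on are irrelevant. -/
theorem exists_vanishing_sequence {K V : Type} [Field K] [AddCommGroup V] [Module K V]
    [FiniteDimensional K V] {d r α : ℕ} (E : Fin r → Finset (Fin d))
    (hE : ∀ j, (E j).Nonempty) (f : ∀ j, MultilinearMap K (fun _ : ↥(E j) => V) K)
    (hm : r * α.choose (d - 1) + α < finrank K V) (n : ℕ) (hn : n ≤ α + 1) :
    ∃ u : ℕ → V, LinearIndependent K (fun i : Fin n => u i) ∧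
      ∀ j, ∀ a : Fin d → ℕ, StrictMono a → (∀ i, a i ≤ α) → (∀ i ∈ E j, a i < n) →
        f j (fun i => u (a i)) = 0 := by
  classical
  induction n with
  | zero =>
    refine ⟨0, linearIndependent_empty_type, fun j a _ _ h => ?_⟩
    obtain ⟨i, hi⟩ := hE j
    exact absurd (h i hi) (by simp)
  | succ n ih =>
    obtain ⟨u, hu, hf⟩ := ih (by omega)
    -- `u n` can only occur in `(u (a i))_{i ∈ E j}` at the last position `e j` of `E j`, so the
    -- conditions on it are linear.
    let e : Fin r → Fin d := fun j => (E j).max' (hE j)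
    have he : ∀ j, e j ∈ E j := fun j => Finset.max'_mem _ _
    -- `T j` collects the possible sets `{a i | i < e j}` when `a (e j) = n`. There is none if the
    -- `d - 1 - e j` entries after position `e j` cannot fit between `n` and `α`; it is this
    -- restriction that makes `C(α, d-1)` an upper bound for the number of conditions.
    let T : Fin r → Finset (Finset ℕ) := fun j =>
      if n + (d - 1 - (e j).1) ≤ α then (Finset.range n).powersetCard (e j).1 else ∅
    have hT : ∀ j, (T j).card ≤ α.choose (d - 1) := by
      intro j
      by_cases h : n + (d - 1 - (e j).1) ≤ α
      · simp only [T, if_pos h, Finset.card_powersetCard, Finset.card_range]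
        have h1 := choose_le_choose_add n (e j).1 (d - 1 - (e j).1)
        have h2 : (e j).1 + (d - 1 - (e j).1) = d - 1 := by have := (e j).2; omega
        rw [h2] at h1
        exact h1.trans (Nat.choose_le_choose _ h)
      · simp [T, if_neg h]
    let φ : (Σ j : Fin r, ↥(T j)) → V →ₗ[K] K := fun p =>
      (f p.1).toLinearMap (fun i => u (Nat.nth (· ∈ p.2.1) i.1.1)) ⟨e p.1, he p.1⟩
    have hcard : Fintype.card (Σ j : Fin r, ↥(T j)) ≤ r * α.choose (d - 1) := by
      rw [Fintype.card_sigma]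
      calc ∑ j, Fintype.card ↥(T j) ≤ ∑ _j : Fin r, α.choose (d - 1) :=
            Finset.sum_le_sum fun j _ => by simpa using hT j
        _ = r * α.choose (d - 1) := by simp
    have hspan : finrank K (Submodule.span K (Set.range fun i : Fin n => u i)) = n := by
      simpa using finrank_span_eq_card hu
    obtain ⟨x, hxN, hx⟩ := exists_vanishing_notMem φ
      (Submodule.span K (Set.range fun i : Fin n => u i)) (by omega)
    have hold : ∀ k, k < n → Function.update u n x k = u k := fun k hk =>
      Function.update_of_ne hk.ne _ _
    refine ⟨Function.update u n x, ?_, fun j a ha haα han => ?_⟩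
    · have h := linearIndependent_finSnoc.2 ⟨hu, hxN⟩
      convert h using 1
      funext i
      refine Fin.lastCases ?_ (fun i => ?_) i
      · simp
      · simp only [Fin.snoc_castSucc, Fin.val_castSucc]
        exact hold _ i.2
    · have hlt : ∀ i ∈ E j, i ≠ e j → i < e j := fun i hi hne =>
        lt_of_le_of_ne (Finset.le_max' _ _ hi) hne
      by_cases hlast : a (e j) < n
      · have hall : ∀ i ∈ E j, a i < n := fun i hi =>
          (ha.monotone (Finset.le_max' _ _ hi)).trans_lt hlast
        rw [← hf j a ha haα hall]
        congr 1
        funext i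
        exact hold _ (hall i.1 i.2)
      · have hae : a (e j) = n := by have := han _ (he j); omega
        have hd : n + (d - 1 - (e j).1) ≤ α := by
          have hdl := (e j).2
          have h := strictMono_add_le ha (e := e j) (k := ⟨d - 1, by omega⟩)
            (by rw [Fin.le_def]; simp; omega)
          have := haα ⟨d - 1, by omega⟩
          simp only at h
          omega
        have hS : (Finset.Iio (e j)).image a ∈ T j := by
          simp only [T, if_pos hd, Finset.mem_powersetCard]
          refine ⟨fun y hy => ?_, ?_⟩
          · obtain ⟨k, hk, rfl⟩ := Finset.mem_image.1 hy
            rw [Finset.mem_range, ← hae]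
            exact ha (Finset.mem_Iio.1 hk)
          · rw [Finset.card_image_of_injective _ ha.injective, Fin.card_Iio]
        have h := hx ⟨j, _, hS⟩
        simp only [φ, MultilinearMap.toLinearMap_apply] at h
        rw [← h]
        congr 1
        funext i
        by_cases hi : i = ⟨e j, he j⟩
        · subst hi
          simp [hae]
        · have hi' : i.1 < e j := hlt i.1 i.2 fun h => hi (Subtype.ext h)
          rw [Function.update_of_ne hi, nth_image_Iio ha hi', hold]
          rw [← hae]
          exact ha hi'

/-- An alternating map vanishes on the span of `u` as soon as it vanishes on the increasing
subfamilies of `u`. -/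
theorem alternating_eq_zero_on_span {K V W : Type} [Field K] [AddCommGroup V] [Module K V]
    [AddCommGroup W] [Module K W] {d n : ℕ} (F : AlternatingMap K V W (Fin d)) {u : Fin n → V}
    (hu : LinearIndependent K u) (h : ∀ a : Fin d → Fin n, StrictMono a → F (u ∘ a) = 0)
    (v : Fin d → V) (hv : ∀ i, v i ∈ Submodule.span K (Set.range u)) : F v = 0 := by
  have hzero : F.compLinearMap (Submodule.span K (Set.range u)).subtype = 0 := by
    refine Basis.ext_alternating (Basis.span hu) fun a ha => ?_
    have hsort : StrictMono (a ∘ Tuple.sort a) :=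
      (Tuple.monotone_sort a).strictMono_of_injective (ha.comp (Tuple.sort a).injective)
    have h1 := h _ hsort
    rw [← Function.comp_assoc, F.map_perm, Units.smul_def, ← Units.smul_def,
      smul_eq_zero_iff_eq] at h1
    simpa [Basis.span_apply, Function.comp_def] using h1
  simpa using congrArg (fun G => G fun i => (⟨v i, hv i⟩ : Submodule.span K (Set.range u))) hzero

/-- The infimum defining `mapPartitionRank` is over a nonempty set: in a basis `b` of `W`, the
components `b.coord j ∘ F` give a decomposition with `E = univ` in each summand. -/
theorem exists_partitionRank_decomposition {K V W : Type} [Field K] [AddCommGroup V] [Module K V]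
    [AddCommGroup W] [Module K W] [FiniteDimensional K W] {d : ℕ} (hd : 0 < d)
    (F : MultilinearMap K (fun _ : Fin d => V) W) :
    ∃ r, ∃ c : Fin r → MultilinearMap K (fun _ : Fin d => V) W,
      (∀ j, IsPartitionRankOneMap (c j)) ∧ F = ∑ j, c j := by
  let b := Module.finBasis K W
  refine ⟨_, fun j => ((LinearMap.toSpanSingleton K W (b j)).comp (b.coord j)).compMultilinearMap F,
    fun j => ?_, ?_⟩
  · have : IsEmpty ↥((Finset.univ : Finset (Fin d))ᶜ) := ⟨fun i => by simpa using i.2⟩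
    refine ⟨Finset.univ, ⟨⟨0, hd⟩, Finset.mem_univ _⟩,
      ((b.coord j).compMultilinearMap F).domDomCongr (Equiv.subtypeUnivEquiv (by simp)).symm,
      MultilinearMap.constOfIsEmpty K _ (b j), fun v => ?_⟩
    simp [MultilinearMap.domDomCongr_apply]
    rfl
  · ext v
    simp [b.sum_repr]

/-- **Bounds on the isotropy index, alternating case.**  If `F : V^d → W` is a nonzero
alternating multilinear map between finite-dimensional vector spaces over a field `K` and
`m = dim V`, then `m ≤ PR(T_F)·C(α_Λ(F), d-1) + α_Λ(F)`. -/
theorem isotropy_index_bound_alternating {K : Type} [Field K] {d : ℕ} (hd : 0 < d)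
    (V W : Type) [AddCommGroup V] [Module K V] [FiniteDimensional K V]
    [AddCommGroup W] [Module K W] [FiniteDimensional K W]
    (F : AlternatingMap K V W (Fin d)) (hF : F ≠ 0) :
    Module.finrank K V ≤
      mapPartitionRank F.toMultilinearMap *
          Nat.choose (vanIndex F.toMultilinearMap) (d - 1) +
        vanIndex F.toMultilinearMap := by
  classical
  obtain ⟨c, hc, hsum⟩ := Nat.sInf_mem
    (s := {r : ℕ | ∃ c : Fin r → MultilinearMap K (fun _ : Fin d => V) W,
      (∀ j, IsPartitionRankOneMap (c j)) ∧ F.toMultilinearMap = ∑ j, c j})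
    (exists_partitionRank_decomposition hd F.toMultilinearMap)
  change Fin (mapPartitionRank F.toMultilinearMap) → _ at c
  by_contra! hlt
  choose E hE f G hfG using hc
  obtain ⟨u, hu, hf⟩ := exists_vanishing_sequence E hE f hlt _ le_rfl
  have hiso := alternating_eq_zero_on_span F hu fun a ha => by
    have hval : ∀ v, F v = ∑ j, c j v := fun v => by
      have h := congrArg (fun M => M v) hsum
      exact h.trans (sum_apply _ _ _)
    rw [hval]
    refine Finset.sum_eq_zero fun j _ => ?_
    have h0 := hf j (fun i => (a i).1) (fun i k hik => ha hik)
      (fun i => Nat.lt_succ_iff.1 (a i).2) (fun i _ => (a i).2)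
    rw [hfG j]
    simp only [Function.comp_apply]
    rw [h0, zero_smul]
  have hbdd : BddAbove {s : ℕ | ∃ U : Submodule K V, Module.finrank K U = s ∧
      ∀ v : Fin d → V, (∀ i, v i ∈ U) → F.toMultilinearMap v = 0} :=
    ⟨finrank K V, by rintro s ⟨U, rfl, -⟩; exact Submodule.finrank_le U⟩
  have hle : vanIndex F.toMultilinearMap + 1 ≤ vanIndex F.toMultilinearMap :=
    le_csSup hbdd ⟨_, by simpa using finrank_span_eq_card hu, hiso⟩
  omega
end

section
/- Let V_1, ..., V_d, W be finite-dimensional vector spaces over a field K and let F : V_1 × ... × V_d → W be a nonzero multilinear map. If K is infinite, then GR(T_F) < (β(F)+1)^d. If K is finite with q elements, then AR(T_F) < d + (β(F)+1)^d + ⌈(β(F)+1)^d·(d-1)/(q-1)⌉. -/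
/-!
Put `r = β(F) + 1` and `N = r ^ d`. If there were vectors `v i j` (`i < d`, `j < r`) such that the
`N` vectors `F (v 1 (J 1), …, v d (J d))` were linearly independent, their spans would be
`r`-dimensional subspaces on which `F` is injective, contradicting the maximality of `β(F)`
(`le_compIndex`). Hence every array `z` satisfies a nontrivial relation
`∑ J, c J • F (z_J) = 0`. Both halves compare the solutions of such a relation with the zeros of
`F`. Fix `J₀` with `c J₀ ≠ 0`. Seen as an equation in the single entry `z i (J₀ i)`, the relation is
affine, and its linear part is the same relation restricted to the indices `J` with `J i = J₀ i`.
Passing to the linear part for each `i` in turn leaves `c J₀ • F (z_{J₀}) = 0`, i.e. a zero of `F`.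

*Finite fields.* A fibre of an affine map has at most as many elements as the kernel of its linear
part, so for each fixed `c ≠ 0` the density of arrays satisfying the relation is at most the density
of the zeros of `F` (`card_relation_mul_le`). If `AR(T_F) ≥ N`, this density is at most `q ^ (-N)`,
and since there are only `q ^ N - 1` nonzero `c`, the union bound leaves an array without any
relation (`exists_independent_of_card`). So in fact `AR(T_F) < N`, which is more than required.

*Infinite fields.* The same argument is run with transcendence degrees in place of cardinalities.
Take the array `x` whose coordinates are independent variables over `K`, inside a field `L` of
infinite transcendence degree. It satisfies a relation over `L`, for otherwise a specialisation to
`K` would give an independent family (`exists_specialise`). Normalise `c J₀ = 1`. Solutions of a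
solvable affine linear system over a subfield are no more generic than those of its homogeneous part
(`exists_homogeneous_point`), so the descent above produces a zero `y` of `F` over `L`, such that
`y`, the remaining entries and the `N - 1` remaining coefficients together have at least the
transcendence degree of `x`. Thus `y` has transcendence degree greater than `∑ dim V i - N`
(`exists_zero_of_relation`). The polynomials vanishing at `y` form a prime ideal containing the
equations of `F`, of height at most `∑ dim V i` minus the transcendence degree of `y`
(`height_ker_aeval_add_eRk_le`), hence less than `N`.
-/

open Module
open scoped TensorProduct

/-- The height of an ideal: the infimum of the heights of the prime ideals containing it
(in the poset of prime ideals ordered by inclusion). -/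
noncomputable def idealHeight {R : Type*} [CommRing R] (I : Ideal R) : ℕ∞ :=
  ⨅ p ∈ {p : PrimeSpectrum R | I ≤ p.asIdeal}, Order.height p

section Defs

variable {K : Type} [Field K] {d : ℕ} {V : Fin d → Type} {W : Type}
  [∀ i, AddCommGroup (V i)] [∀ i, Module K (V i)]
  [AddCommGroup W] [Module K W]

/-- The completeness index `β(F)` of a multilinear map `F : V₁ × ⋯ × V_d → W`: the largest `s`
such that there are subspaces `Uᵢ ⊆ Vᵢ`, all of dimension `s`, for which the restriction of `F`
to `U₁ × ⋯ × U_d`, viewed as a linear map `U₁ ⊗ ⋯ ⊗ U_d → W`, is injective. -/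
noncomputable def compIndex (F : MultilinearMap K V W) : ℕ :=
  sSup {s : ℕ | ∃ U : ∀ i, Submodule K (V i),
    (∀ i, Module.finrank K (U i) = s) ∧
    Function.Injective
      (PiTensorProduct.lift (F.compLinearMap fun i => (U i).subtype))}

variable [∀ i, FiniteDimensional K (V i)] [FiniteDimensional K W]

/-- The geometric rank `GR(T_F)` of the tensor `T_F ∈ V₁* ⊗ ⋯ ⊗ V_d* ⊗ W` corresponding to a
multilinear map `F`: the codimension of the Zariski-closed set
`{(v₁, …, v_d) : F(v₁, …, v_d) = 0}` (identifying `Vᵢ** = Vᵢ`), computed as the height of the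
ideal of the polynomial ring generated by the coordinate polynomials of `F` with respect to
choices of bases. -/
noncomputable def mapGeomRank (F : MultilinearMap K V W) : ℕ∞ :=
  idealHeight (Ideal.span (Set.range fun w : Module.Free.ChooseBasisIndex K W =>
    ∑ g : ∀ i, Module.Free.ChooseBasisIndex K (V i),
      MvPolynomial.C
          ((Module.Free.chooseBasis K W).coord w
            (F fun i => Module.Free.chooseBasis K (V i) (g i))) *
        ∏ i, MvPolynomial.X (⟨i, g i⟩ : Σ i, Module.Free.ChooseBasisIndex K (V i))))

/-- The analytic rank `AR(T_F)` (over a finite field with `q = |K|` elements) of the tensor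
`T_F` corresponding to a multilinear map `F`:
`AR(T_F) = ∑ᵢ dim Vᵢ − log_q |{v : F v = 0}|`. -/
noncomputable def mapAnalyticRank (F : MultilinearMap K V W) : ℝ :=
  (∑ i, (Module.finrank K (V i) : ℝ)) -
    Real.logb (Nat.card K) (Nat.card {v : ∀ i, V i // F v = 0})

end Defs

/-! ### Independent values bound the completeness index from below -/

section Sharp

variable {K : Type*} [Field K] {d : ℕ} {V : Fin d → Type*} {W : Type*}
  [∀ i, AddCommGroup (V i)] [∀ i, Module K (V i)]
  [AddCommGroup W] [Module K W]

theorem injective_lift_span (F : MultilinearMap K V W) {r : ℕ}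
    (v : ∀ i, Fin r → V i) (hv : ∀ i, LinearIndependent K (v i))
    (h : LinearIndependent K fun J : Fin d → Fin r => F fun i => v i (J i)) :
    Function.Injective (PiTensorProduct.lift
      (F.compLinearMap fun i => (Submodule.span K (Set.range (v i))).subtype)) := by
  let b := Basis.piTensorProduct fun i => Module.Basis.span (hv i)
  have hb : (PiTensorProduct.lift
      (F.compLinearMap fun i => (Submodule.span K (Set.range (v i))).subtype)) ∘ b =
        fun J : Fin d → Fin r => F fun i => v i (J i) := by
    funext J
    simp [b, Basis.piTensorProduct_apply, Module.Basis.span_apply]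
  intro x y hxy
  apply b.repr.injective
  apply h
  simpa only [← hb, ← Finsupp.apply_linearCombination, b.linearCombination_repr] using hxy

/-- Independence of the `F (v_J)` passes to each family `v i`: fix all the other arguments of `F`. -/
theorem linearIndependent_factor (F : MultilinearMap K V W) {r : ℕ}
    (v : ∀ i, Fin r → V i)
    (h : LinearIndependent K fun J : Fin d → Fin r => F fun i => v i (J i)) (i : Fin d) :
    LinearIndependent K (v i) := by
  rcases Nat.eq_zero_or_pos r with rfl | hr
  · exact linearIndependent_empty_type
  let J₀ : Fin d → Fin r := fun _ => ⟨0, hr⟩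
  have h1 := h.comp (fun j : Fin r => Function.update J₀ i j) (Function.update_injective J₀ i)
  refine LinearIndependent.of_comp (F.toLinearMap (fun k => v k (J₀ k)) i) ?_
  convert h1 using 1
  funext j
  simp only [Function.comp_apply, MultilinearMap.toLinearMap_apply]
  congr 1
  funext k
  by_cases hk : k = i
  · subst hk; simp
  · simp [hk]

end Sharp

theorem le_compIndex {K : Type} [Field K] {d : ℕ} (hd : 0 < d) {V : Fin d → Type} {W : Type}
    [∀ i, AddCommGroup (V i)] [∀ i, Module K (V i)] [∀ i, FiniteDimensional K (V i)]
    [AddCommGroup W] [Module K W]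
    (F : MultilinearMap K V W) {r : ℕ} (v : ∀ i, Fin r → V i)
    (h : LinearIndependent K fun J : Fin d → Fin r => F fun i => v i (J i)) :
    r ≤ compIndex F := by
  have hv := linearIndependent_factor F v h
  refine le_csSup ⟨finrank K (V ⟨0, hd⟩), ?_⟩ ⟨fun i => Submodule.span K (Set.range (v i)), ?_,
    injective_lift_span F v hv h⟩
  · rintro s ⟨U, hU, -⟩
    rw [← hU ⟨0, hd⟩]
    exact Submodule.finrank_le _
  · intro i
    simpa using finrank_span_eq_card (hv i)

/-! ### Slices of a relation -/

/-- The array `z` with its entry at position `(i, j)` replaced by `u`. -/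
def setEntry {d r : ℕ} {V : Fin d → Type*} (z : ∀ i, Fin r → V i) (i : Fin d) (j : Fin r)
    (u : V i) : ∀ i, Fin r → V i :=
  Function.update z i (Function.update (z i) j u)

theorem setEntry_setEntry_self {d r : ℕ} {V : Fin d → Type*} (z : ∀ i, Fin r → V i) (i : Fin d)
    (j : Fin r) (u : V i) : setEntry (setEntry z i j u) i j (z i j) = z := by
  simp [setEntry]

theorem setEntry_same {d r : ℕ} {V : Fin d → Type*} (z : ∀ i, Fin r → V i) (i : Fin d)
    (j : Fin r) (u : V i) : setEntry z i j u i j = u := by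
  simp [setEntry]

section Slice

variable {K : Type*} [Field K] {d r : ℕ} {V : Fin d → Type*} {W : Type*}
  [∀ i, AddCommGroup (V i)] [∀ i, Module K (V i)]
  [AddCommGroup W] [Module K W]

/-- The relation with coefficients `c`, evaluated at the array `z`, restricted to the indices `J` that
agree with `J₀` on `S`. -/
def sliceSum (F : MultilinearMap K V W) (c : (Fin d → Fin r) → K) (J₀ : Fin d → Fin r)
    (S : Finset (Fin d)) (z : ∀ i, Fin r → V i) : W :=
  ∑ J with ∀ i ∈ S, J i = J₀ i, c J • F fun i => z i (J i)

theorem sliceSum_univ (F : MultilinearMap K V W) (c : (Fin d → Fin r) → K) (J₀ : Fin d → Fin r)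
    (z : ∀ i, Fin r → V i) :
    sliceSum F c J₀ Finset.univ z = c J₀ • F fun i => z i (J₀ i) := by
  rw [sliceSum, Finset.sum_eq_single J₀]
  · intro J hJ hne
    exact absurd (funext fun i => (Finset.mem_filter.1 hJ).2 i (Finset.mem_univ i)) hne
  · simp

theorem sliceSum_empty (F : MultilinearMap K V W) (c : (Fin d → Fin r) → K) (J₀ : Fin d → Fin r)
    (z : ∀ i, Fin r → V i) :
    sliceSum F c J₀ ∅ z = ∑ J, c J • F fun i => z i (J i) := by
  simp [sliceSum]

/-- The linear part of `sliceSum F c J₀ S` as a function of the entry `(i, J₀ i)` of the array, the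
other entries being those of `z`. -/
def sliceLin (F : MultilinearMap K V W) (c : (Fin d → Fin r) → K) (J₀ : Fin d → Fin r)
    (S : Finset (Fin d)) (i : Fin d) (z : ∀ i, Fin r → V i) : V i →ₗ[K] W :=
  ∑ J with ∀ k ∈ insert i S, J k = J₀ k, c J • F.toLinearMap (fun k => z k (J k)) i

/-- The constant part of `sliceSum F c J₀ S` as a function of the entry `(i, J₀ i)`: the terms not
involving that entry. -/
def sliceRem (F : MultilinearMap K V W) (c : (Fin d → Fin r) → K) (J₀ : Fin d → Fin r)
    (S : Finset (Fin d)) (i : Fin d) (z : ∀ i, Fin r → V i) : W :=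
  ∑ J with (∀ k ∈ S, J k = J₀ k) ∧ J i ≠ J₀ i, c J • F fun k => z k (J k)

/-- The linear part of a slice is the slice with `i` adjoined to `S`. -/
theorem sliceSum_insert_setEntry (F : MultilinearMap K V W) (c : (Fin d → Fin r) → K)
    (J₀ : Fin d → Fin r) (S : Finset (Fin d)) (i : Fin d) (z : ∀ i, Fin r → V i) (u : V i) :
    sliceSum F c J₀ (insert i S) (setEntry z i (J₀ i) u) = sliceLin F c J₀ S i z u := by
  rw [sliceSum, sliceLin, LinearMap.sum_apply]
  refine Finset.sum_congr rfl fun J hJ => ?_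
  have hi : J i = J₀ i := (Finset.mem_filter.1 hJ).2 i (Finset.mem_insert_self i S)
  rw [LinearMap.smul_apply, MultilinearMap.toLinearMap_apply]
  congr 2
  funext k
  by_cases hk : k = i
  · subst hk; simp [setEntry, hi]
  · simp [setEntry, hk]

theorem sliceSum_setEntry (F : MultilinearMap K V W) (c : (Fin d → Fin r) → K)
    (J₀ : Fin d → Fin r) (S : Finset (Fin d)) (i : Fin d) (z : ∀ i, Fin r → V i) (u : V i) :
    sliceSum F c J₀ S (setEntry z i (J₀ i) u) =
      sliceLin F c J₀ S i z u + sliceRem F c J₀ S i z := by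
  rw [← sliceSum_insert_setEntry, sliceSum, sliceSum, sliceRem,
    ← Finset.sum_filter_add_sum_filter_not _ (fun J : Fin d → Fin r => J i = J₀ i),
    Finset.filter_filter, Finset.filter_filter]
  congr 1
  · refine Finset.sum_congr (Finset.filter_congr fun J _ => ?_) fun _ _ => rfl
    simp only [Finset.forall_mem_insert]
    tauto
  · refine Finset.sum_congr rfl fun J hJ => ?_
    have hi : J i ≠ J₀ i := (Finset.mem_filter.1 hJ).2.2
    congr 2
    funext k
    by_cases hk : k = i
    · subst hk; simp [setEntry, hi]
    · simp [setEntry, hk]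

end Slice

/-! ### Counting zeros over a finite field -/

/-- Here `s x u` replaces one coordinate `g x` of `x` by `u`. The pairs `(x, u)` with `P (s x u)` are
counted by recording `s x u` together with the overwritten value `g x`. -/
theorem card_subtype_set {X U : Type*} (s : X → U → X) (g : X → U)
    (h₁ : ∀ x u, s (s x u) (g x) = x) (h₂ : ∀ x u, g (s x u) = u) (P : X → Prop) :
    Nat.card {p : X × U // P (s p.1 p.2)} = Nat.card {x // P x} * Nat.card U := by
  rw [← Nat.card_prod]
  refine Nat.card_congr
    { toFun := fun p => (⟨s p.1.1 p.1.2, p.2⟩, g p.1.1)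
      invFun := fun p => ⟨(s p.1.1 p.2, g p.1.1), by simpa only [h₁] using p.1.2⟩
      left_inv := ?_
      right_inv := ?_ }
  · rintro ⟨⟨x, u⟩, hp⟩
    simp [h₁, h₂]
  · rintro ⟨⟨x, hx⟩, u⟩
    simp [h₁, h₂]

/-- To compare two sets it suffices to compare their fibres in the direction of one coordinate. -/
theorem card_le_of_fiberwise {X U : Type*} [Finite X] [Finite U] [Nonempty U]
    (s : X → U → X) (g : X → U)
    (h₁ : ∀ x u, s (s x u) (g x) = x) (h₂ : ∀ x u, g (s x u) = u) (P Q : X → Prop)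
    (hPQ : ∀ x, Nat.card {u // P (s x u)} ≤ Nat.card {u // Q (s x u)}) :
    Nat.card {x // P x} ≤ Nat.card {x // Q x} := by
  classical
  have := Fintype.ofFinite X
  refine Nat.le_of_mul_le_mul_right ?_ (Nat.card_pos (α := U))
  rw [← card_subtype_set s g h₁ h₂, ← card_subtype_set s g h₁ h₂,
    Nat.card_congr (Equiv.subtypeProdEquivSigmaSubtype fun x u => P (s x u)),
    Nat.card_congr (Equiv.subtypeProdEquivSigmaSubtype fun x u => Q (s x u)),
    Nat.card_sigma, Nat.card_sigma]
  exact Finset.sum_le_sum fun x _ => hPQ x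

theorem card_affine_le {K U W : Type*} [Field K] [AddCommGroup U] [Module K U] [AddCommGroup W]
    [Module K W] [Finite U] (Λ : U →ₗ[K] W) (b : W) :
    Nat.card {u // Λ u + b = 0} ≤ Nat.card {u // Λ u = 0} := by
  rcases isEmpty_or_nonempty {u // Λ u + b = 0} with h | ⟨⟨u₀, h₀⟩⟩
  · simp
  · refine Nat.card_le_card_of_injective
      (fun u => ⟨u.1 - u₀, ?_⟩) ?_
    · have := u.2
      rw [map_sub, eq_neg_of_add_eq_zero_left this, eq_neg_of_add_eq_zero_left h₀, sub_self]
    · rintro ⟨u, hu⟩ ⟨u', hu'⟩ h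
      simpa using h

section Finite

variable {K : Type*} [Field K] {d r : ℕ} {V : Fin d → Type*} {W : Type*}
  [∀ i, AddCommGroup (V i)] [∀ i, Module K (V i)]
  [AddCommGroup W] [Module K W] [∀ i, Finite (V i)]

theorem card_sliceSum_le (F : MultilinearMap K V W) (c : (Fin d → Fin r) → K)
    (J₀ : Fin d → Fin r) (S : Finset (Fin d)) :
    Nat.card {z : ∀ i, Fin r → V i // sliceSum F c J₀ ∅ z = 0} ≤
      Nat.card {z : ∀ i, Fin r → V i // sliceSum F c J₀ S z = 0} := by
  induction S using Finset.induction_on with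
  | empty => exact le_rfl
  | insert i S _ ih =>
    refine ih.trans (card_le_of_fiberwise (fun z u => setEntry z i (J₀ i) u)
      (fun z => z i (J₀ i)) (fun z u => setEntry_setEntry_self z i _ u)
      (fun z u => setEntry_same z i _ u) _ _ fun z => ?_)
    simp only [sliceSum_insert_setEntry]
    simp only [sliceSum_setEntry]
    exact card_affine_le _ _

/-- For fixed `c ≠ 0`, the density of the arrays satisfying the relation `c` is at most the density of
the zeros of `F`, with denominators cleared. -/
theorem card_relation_mul_le (F : MultilinearMap K V W) (c : (Fin d → Fin r) → K) (hc : c ≠ 0) :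
    Nat.card {z : ∀ i, Fin r → V i // ∑ J, c J • F (fun i => z i (J i)) = 0} *
        Nat.card (∀ i, V i) ≤
      Nat.card (∀ i, Fin r → V i) * Nat.card {v : ∀ i, V i // F v = 0} := by
  classical
  obtain ⟨J₀, hJ₀⟩ := Function.ne_iff.1 hc
  have h1 := card_sliceSum_le F c J₀ Finset.univ
  simp only [sliceSum_empty, sliceSum_univ, smul_eq_zero_iff_right hJ₀] at h1
  refine (Nat.mul_le_mul_right _ h1).trans ?_
  rw [← card_subtype_set (fun (z : ∀ i, Fin r → V i) (v : ∀ i, V i) =>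
      fun i => Function.update (z i) (J₀ i) (v i)) (fun z i => z i (J₀ i))
      (by intro z v; simp) (by intro z v; simp) (fun z => F (fun i => z i (J₀ i)) = 0),
    ← Nat.card_prod]
  refine Nat.card_le_card_of_injective (fun p => (p.1.1, ⟨p.1.2, by simpa using p.2⟩)) ?_
  rintro ⟨⟨z, v⟩, h⟩ ⟨⟨z', v'⟩, h'⟩ heq
  simpa using heq

/-- The union bound over all nonzero `c`: if the zeros of `F` have density at most `q ^ (-r ^ d)`, some
array satisfies no relation. -/
theorem exists_independent_of_card [Finite K] (hd : 0 < d) (F : MultilinearMap K V W)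
    (h : Nat.card K ^ (r ^ d) * Nat.card {v : ∀ i, V i // F v = 0} ≤ Nat.card (∀ i, V i)) :
    ∃ v : ∀ i, Fin r → V i,
      LinearIndependent K fun J : Fin d → Fin r => F fun i => v i (J i) := by
  classical
  by_contra! hdep
  have := Fintype.ofFinite K
  set Z := ∀ i, Fin r → V i
  let C := {c : (Fin d → Fin r) → K // c ≠ 0}
  -- every array lies in the zero set of a nonzero relation
  have hcov : Nat.card Z ≤
      Nat.card (Σ c : C, {z : Z // ∑ J, c.1 J • F (fun i => z i (J i)) = 0}) := by
    refine Nat.card_le_card_of_surjective (fun p => p.2.1) fun z => ?_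
    have hz := hdep z
    rw [Fintype.not_linearIndependent_iff] at hz
    obtain ⟨c, hc, J, hJ⟩ := hz
    exact ⟨⟨⟨c, fun h0 => hJ (congrFun h0 J)⟩, ⟨z, hc⟩⟩, rfl⟩
  have hC : Nat.card C < Nat.card K ^ (r ^ d) := by
    have h1 : Nat.card C < Nat.card ((Fin d → Fin r) → K) := by
      simp only [Nat.card_eq_fintype_card]
      exact Fintype.card_subtype_lt (x := 0) (by simp)
    simpa [Nat.card_fun] using h1
  rw [Nat.card_sigma] at hcov
  have h2 : Nat.card Z * Nat.card (∀ i, V i) ≤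
      Nat.card C * (Nat.card Z * Nat.card {v : ∀ i, V i // F v = 0}) := by
    refine (Nat.mul_le_mul_right _ hcov).trans ?_
    rw [Finset.sum_mul]
    refine (Finset.sum_le_sum fun c _ => card_relation_mul_le F c.1 c.2).trans ?_
    simp [Z]
  have hZ : 0 < Nat.card Z := Nat.card_pos
  have hF0 : 0 < Nat.card {v : ∀ i, V i // F v = 0} := by
    have : Nonempty {v : ∀ i, V i // F v = 0} := ⟨⟨0, F.map_coord_zero ⟨0, hd⟩ rfl⟩⟩
    exact Nat.card_pos
  have h3 : Nat.card (∀ i, V i) ≤ Nat.card C * Nat.card {v : ∀ i, V i // F v = 0} := by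
    refine Nat.le_of_mul_le_mul_left ?_ hZ
    calc _ ≤ _ := h2
      _ = _ := by ring
  exact absurd (h.trans h3) (not_le.2 (Nat.mul_lt_mul_of_pos_right hC hF0))

end Finite

/-- The sharper bound `AR(T_F) < (β(F) + 1) ^ d` over a finite field. -/
theorem analyticRank_lt {K : Type} [Field K] [Finite K] {d : ℕ} (hd : 0 < d) {V : Fin d → Type}
    {W : Type} [∀ i, AddCommGroup (V i)] [∀ i, Module K (V i)] [∀ i, FiniteDimensional K (V i)]
    [AddCommGroup W] [Module K W] (F : MultilinearMap K V W) :
    mapAnalyticRank F < ((compIndex F + 1) ^ d : ℕ) := by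
  have : ∀ i, Finite (V i) := fun i => Module.finite_of_finite K
  set N := (compIndex F + 1) ^ d
  by_contra! hle
  have hq : 1 < Nat.card K := Finite.one_lt_card
  have hq' : (1 : ℝ) < Nat.card K := by exact_mod_cast hq
  have : Nonempty {v : ∀ i, V i // F v = 0} := ⟨⟨0, F.map_coord_zero ⟨0, hd⟩ rfl⟩⟩
  have hpos : (0 : ℝ) < Nat.card {v : ∀ i, V i // F v = 0} := by exact_mod_cast Nat.card_pos
  have hcard : Nat.card (∀ i, V i) = Nat.card K ^ ∑ i, finrank K (V i) := by
    rw [Nat.card_pi, ← Finset.prod_pow_eq_pow_sum]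
    exact Finset.prod_congr rfl fun i _ => Module.natCard_eq_pow_finrank
  have key : Nat.card K ^ N * Nat.card {v : ∀ i, V i // F v = 0} ≤ Nat.card (∀ i, V i) := by
    have h1 : Real.logb (Nat.card K)
        ((Nat.card K : ℝ) ^ N * Nat.card {v : ∀ i, V i // F v = 0}) ≤
          Real.logb (Nat.card K) ((Nat.card K : ℝ) ^ ∑ i, finrank K (V i)) := by
      rw [Real.logb_mul (by positivity) hpos.ne', Real.logb_pow, Real.logb_pow,
        Real.logb_self_eq_one hq']
      rw [mapAnalyticRank] at hle
      push_cast
      linarith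
    rw [Real.logb_le_logb hq' (by positivity) (by positivity)] at h1
    rw [hcard]
    exact_mod_cast h1
  obtain ⟨v, hv⟩ := exists_independent_of_card hd F key
  exact absurd (le_compIndex hd F v hv) (by simp)

/-! ### Heights and transcendence degree -/

/-- If the values `y` at the variables in `β` are algebraically independent, the polynomials in these
variables can be inverted without losing the prime ideal of `y`; what remains is a polynomial ring in
the variables `α` over a field, of dimension `|α|`. -/
theorem height_ker_aeval_le_of_sum {K L α β : Type*} [Field K] [Field L] [Algebra K L]
    [Finite α] [Finite β] (y : α ⊕ β → L) (hy : AlgebraicIndependent K (y ∘ Sum.inr)) :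
    (RingHom.ker (MvPolynomial.aeval (R := K) y)).height ≤ Nat.card α := by
  let A := MvPolynomial β K
  let e := MvPolynomial.sumAlgEquiv K α β
  let f : MvPolynomial α A →ₐ[K] L := (MvPolynomial.aeval y).comp e.symm.toAlgHom
  have hp : RingHom.ker (MvPolynomial.aeval (R := K) y) =
      (RingHom.ker f).comap e.toRingEquiv := by
    ext x
    simp [f, RingHom.mem_ker, Ideal.mem_comap]
  have hfC : ∀ a : A, f (MvPolynomial.C a) = MvPolynomial.aeval (y ∘ Sum.inr) a := by
    intro a
    have : e.symm (MvPolynomial.C a) = MvPolynomial.rename Sum.inr a := by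
      rw [AlgEquiv.symm_apply_eq]
      induction a using MvPolynomial.induction_on with
      | C r => simp [e]
      | add p q hp hq => simp [hp, hq]
      | mul_X p i hp => simp [hp, e]
    simp [f, this, MvPolynomial.aeval_rename]
  rw [hp, RingEquiv.height_comap]
  let M : Submonoid (MvPolynomial α A) := (nonZeroDivisors A).map MvPolynomial.C
  have hd : Disjoint (M : Set (MvPolynomial α A)) (RingHom.ker f : Set (MvPolynomial α A)) := by
    rw [Set.disjoint_left]
    rintro _ ⟨a, ha, rfl⟩ hker
    rw [SetLike.mem_coe, RingHom.mem_ker] at hker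
    refine nonZeroDivisors.ne_zero ha (hy ?_)
    rw [map_zero, ← hfC]
    exact hker
  have hprime : (RingHom.ker f).IsPrime := RingHom.ker_isPrime _
  let S := MvPolynomial α (FractionRing A)
  let : Algebra (MvPolynomial α A) S := MvPolynomial.algebraMvPolynomial
  have hloc : IsLocalization M S := MvPolynomial.isLocalization (nonZeroDivisors A) _
  rw [← IsLocalization.height_map_of_disjoint (S := S) M _ hd]
  have hprime' := IsLocalization.isPrime_of_isPrime_disjoint M S _ hprime hd
  have h1 := Ideal.height_le_ringKrullDim_of_isPrime
    (I := (RingHom.ker f).map (algebraMap (MvPolynomial α A) S))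
  rw [MvPolynomial.ringKrullDim_of_isNoetherianRing, ringKrullDim_eq_zero_of_field, zero_add] at h1
  exact_mod_cast h1

/-- The height of the prime ideal of a point plus the transcendence degree of the point is at most the
number of variables. -/
theorem height_ker_aeval_add_eRk_le {K L ι : Type*} [Field K] [Field L] [Algebra K L]
    [Finite ι] (y : ι → L) :
    (RingHom.ker (MvPolynomial.aeval (R := K) y)).height +
      (AlgebraicIndependent.matroid K L).eRk (Set.range y) ≤ Nat.card ι := by
  classical
  obtain ⟨I, hI⟩ := (AlgebraicIndependent.matroid K L).exists_isBasis (Set.range y)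
  have hIr := hI.subset
  rw [← hI.encard_eq_eRk]
  obtain ⟨s, hs⟩ : ∃ s : I → ι, ∀ x, y (s x) = x := by
    choose s hs using fun x : I => hIr x.2
    exact ⟨s, hs⟩
  have hinj : Function.Injective s := fun a b h => Subtype.ext (by rw [← hs a, ← hs b, h])
  let T := Set.range s
  have hT : AlgebraicIndependent K (fun t : T => y t) := by
    have h1 : AlgebraicIndependent K ((↑) : I → L) :=
      AlgebraicIndependent.matroid_indep_iff.1 hI.indep
    rw [← algebraicIndependent_equiv (Equiv.ofInjective s hinj)]
    convert h1 using 1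
    funext x
    simp [hs]
  let e : (↥(Tᶜ) ⊕ T) ≃ ι := (Equiv.sumComm _ _).trans (Equiv.Set.sumCompl T)
  have h2 := height_ker_aeval_le_of_sum (K := K) (y ∘ e) (by
    convert hT using 1
    funext t
    simp [e])
  have h3 : RingHom.ker (MvPolynomial.aeval (R := K) (y ∘ e)) =
      (RingHom.ker (MvPolynomial.aeval (R := K) y)).comap
        (MvPolynomial.renameEquiv K e).toRingEquiv := by
    ext x
    simp [RingHom.mem_ker, Ideal.mem_comap, MvPolynomial.aeval_rename]
  rw [h3, RingEquiv.height_comap] at h2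
  have hIT : I.encard = Nat.card T := by
    rw [Nat.card_congr (Equiv.ofInjective s hinj).symm]
    have : Finite I := Finite.of_injective s hinj
    rw [← ENat.card_coe_set_eq, ENat.card_eq_coe_natCard]
  rw [hIT, ← Nat.card_congr e, Nat.card_sum]
  push_cast
  gcongr

/-! ### Moving a point from an affine system to its homogeneous part -/

/-- The relative algebraic closure of `K(A)` in `L`, as a subfield; its underlying set is the
closure of `A` in the matroid of algebraic independence. -/
def closureField (K : Type*) {L : Type*} [Field K] [Field L] [Algebra K L] (A : Set L) :
    Subfield L :=
  { (Subalgebra.algebraicClosure (Algebra.adjoin K A) L).toSubring with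
    inv_mem' := fun _ hx => IsAlgebraic.inv hx }

section ClosureField

variable {K L : Type*} [Field K] [Field L] [Algebra K L]

theorem coe_closureField (A : Set L) :
    (closureField K A : Set L) = (AlgebraicIndependent.matroid K L).closure A := by
  rw [AlgebraicIndependent.matroid_closure_eq]
  rfl

theorem mem_closureField {A : Set L} {x : L} :
    x ∈ closureField K A ↔ x ∈ (AlgebraicIndependent.matroid K L).closure A := by
  rw [← coe_closureField, SetLike.mem_coe]

theorem subset_closureField (A : Set L) {x : L} (hx : x ∈ A) : x ∈ closureField K A :=
  mem_closureField.2 ((AlgebraicIndependent.matroid K L).mem_closure_of_mem hx)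

theorem closureField_mono {A B : Set L} (h : A ⊆ B) : closureField K A ≤ closureField K B :=
  fun _ hx => mem_closureField.2
    ((AlgebraicIndependent.matroid K L).closure_subset_closure h (mem_closureField.1 hx))

theorem algebraMap_mem_closureField (A : Set L) (a : K) : algebraMap K L a ∈ closureField K A := by
  have h : algebraMap K L a ∈ Algebra.adjoin K A := Subalgebra.algebraMap_mem _ a
  exact isAlgebraic_algebraMap (A := L) (⟨_, h⟩ : Algebra.adjoin K A)

theorem eRk_le_of_forall_mem_closureField {A B : Set L} (h : ∀ x ∈ B, x ∈ closureField K A) :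
    (AlgebraicIndependent.matroid K L).eRk B ≤ (AlgebraicIndependent.matroid K L).eRk A := by
  rw [← (AlgebraicIndependent.matroid K L).eRk_closure_eq A]
  exact (AlgebraicIndependent.matroid K L).eRk_mono fun x hx => mem_closureField.1 (h x hx)

theorem mulVec_mem_closureField {α β : Type*} [Fintype β] {A X : Set L} (hX : A ⊆ X)
    (P : Matrix α β (closureField K A)) (t : β → L) (ht : ∀ j, t j ∈ closureField K X) (i : α) :
    (P.map (closureField K A).subtype).mulVec t i ∈ closureField K X :=
  sum_mem fun j _ => mul_mem (closureField_mono hX (P i j).2) (ht j)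

end ClosureField

/-- In a matroid of infinite rank, `m` further points independent of `A` can be found. -/
theorem exists_eRk_union_range_eq {α : Type*} (M : Matroid α) (hM : M.eRank = ⊤) (A : Set α)
    (hA : M.eRk A ≠ ⊤) (m : ℕ) :
    ∃ z : Fin m → α, M.eRk (A ∪ Set.range z) = M.eRk A + m := by
  induction m with
  | zero => exact ⟨Fin.elim0, by simp⟩
  | succ m ih =>
    obtain ⟨z, hz⟩ := ih
    have hlt : M.eRk (A ∪ Set.range z) < M.eRk M.E := by
      rw [hz, M.eRk_ground, hM]
      exact (WithTop.add_ne_top.2 ⟨hA, ENat.natCast_ne_top m⟩).lt_top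
    obtain ⟨e, -, he⟩ := M.exists_eRk_insert_eq_add_one_of_lt hlt
    refine ⟨Fin.cons e z, ?_⟩
    rw [Fin.range_cons, Set.union_insert, he, hz]
    push_cast
    rw [add_assoc]

/-- `B` parametrises the kernel of `M₀`, `C` reads off the parameters, and a vector `t` is recovered
from `M₀ t` and `C t` by means of `D₁` and `D₂`. -/
theorem exists_kernel_matrices {k ι ω : Type*} [Field k] [Fintype ι] [Fintype ω] [DecidableEq ι]
    [DecidableEq ω] (M₀ : Matrix ω ι k) :
    ∃ (m : ℕ) (B : Matrix ι (Fin m) k) (C : Matrix (Fin m) ι k) (D₁ : Matrix ι ω k)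
      (D₂ : Matrix ι (Fin m) k), M₀ * B = 0 ∧ C * B = 1 ∧ D₁ * M₀ + D₂ * C = 1 := by
  let f := Matrix.toLin' M₀
  let m := finrank k (LinearMap.ker f)
  let bas : Basis (Fin m) k (LinearMap.ker f) := finBasis k _
  let B : (Fin m → k) →ₗ[k] (ι → k) := (LinearMap.ker f).subtype ∘ₗ bas.equivFun.symm.toLinearMap
  have hB : LinearMap.ker B = ⊥ := by
    rw [LinearMap.ker_eq_bot]
    exact (Submodule.subtype_injective _).comp bas.equivFun.symm.injective
  obtain ⟨C, hC⟩ := LinearMap.exists_leftInverse_of_injective B hB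
  have hfB : f ∘ₗ B = 0 := by
    refine LinearMap.ext fun t => ?_
    exact (bas.equivFun.symm t).2
  have hinj : LinearMap.ker (f.prod C) = ⊥ := by
    rw [LinearMap.ker_eq_bot']
    intro x hx
    have h1 : f x = 0 := congrArg Prod.fst hx
    have h2 : C x = 0 := congrArg Prod.snd hx
    have hxB : B (bas.equivFun ⟨x, h1⟩) = x := by simp [B]
    have h3 : bas.equivFun ⟨x, h1⟩ = 0 := by
      rw [← LinearMap.id_apply (R := k) (bas.equivFun ⟨x, h1⟩), ← hC, LinearMap.comp_apply, hxB, h2]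
    rw [← hxB, h3, map_zero]
  obtain ⟨D, hD⟩ := LinearMap.exists_leftInverse_of_injective (f.prod C) hinj
  have hD' : (D ∘ₗ LinearMap.inl k _ _) ∘ₗ f + (D ∘ₗ LinearMap.inr k _ _) ∘ₗ C =
      LinearMap.id := by
    rw [← hD]
    refine LinearMap.ext fun x => ?_
    simp [← map_add]
  refine ⟨m, LinearMap.toMatrix' B, LinearMap.toMatrix' C,
    LinearMap.toMatrix' (D ∘ₗ LinearMap.inl k _ _), LinearMap.toMatrix' (D ∘ₗ LinearMap.inr k _ _),
    ?_, ?_, ?_⟩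
  · rw [← LinearMap.toMatrix'_toLin' M₀, ← LinearMap.toMatrix'_comp, hfB, map_zero]
  · rw [← LinearMap.toMatrix'_comp, hC, LinearMap.toMatrix'_id]
  · rw [← LinearMap.toMatrix'_toLin' M₀, ← LinearMap.toMatrix'_comp, ← LinearMap.toMatrix'_comp,
      ← map_add, hD', LinearMap.toMatrix'_id]

/-- A solution `y` of an affine linear system with coefficients algebraic over `K(A)` may be replaced by
a solution of the homogeneous system of at least the same transcendence degree over `K(A)`. With `m`
the dimension of the solution space, that of `y` is at most `m`, and a generic kernel vector
attains `m`. -/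
theorem exists_homogeneous_point {K L ι ω : Type*} [Field K] [Field L] [Algebra K L] [Fintype ι]
    [Fintype ω] [DecidableEq ι] (hL : (AlgebraicIndependent.matroid K L).eRank = ⊤)
    (A : Set L) (hA : (AlgebraicIndependent.matroid K L).eRk A ≠ ⊤)
    (Λ : (ι → L) →ₗ[L] (ω → L)) (hΛ : ∀ i w, Λ (Pi.single i 1) w ∈ closureField K A)
    (b : ω → L) (hb : ∀ w, b w ∈ closureField K A) (y : ι → L) (hy : Λ y + b = 0) :
    ∃ y' : ι → L, Λ y' = 0 ∧
      (AlgebraicIndependent.matroid K L).eRk (A ∪ Set.range y) ≤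
        (AlgebraicIndependent.matroid K L).eRk (A ∪ Set.range y') := by
  classical
  set M := AlgebraicIndependent.matroid K L
  let k := closureField K A
  let M₀ : Matrix ω ι k := fun w i => ⟨Λ (Pi.single i 1) w, hΛ i w⟩
  let φ : k →+* L := k.subtype
  have hΛ' : ∀ t, Λ t = (M₀.map φ).mulVec t := by
    intro t
    have : M₀.map φ = LinearMap.toMatrix' Λ := by
      ext w i
      rw [LinearMap.toMatrix'_apply, Matrix.map_apply]
      simp only [M₀, φ, Subfield.coe_subtype]
    rw [this, LinearMap.toMatrix'_mulVec]
  obtain ⟨m, B, C, D₁, D₂, h1, h2, h3⟩ := exists_kernel_matrices M₀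
  obtain ⟨z, hz⟩ := exists_eRk_union_range_eq M hL A hA m
  refine ⟨(B.map φ).mulVec z, ?_, ?_⟩
  · rw [hΛ', Matrix.mulVec_mulVec, ← Matrix.map_mul, h1]
    simp
  · have hup : M.eRk (A ∪ Set.range y) ≤ M.eRk A + m := by
      let t := (C.map φ).mulVec y
      have hyt : y = (D₁.map φ).mulVec (-b) + (D₂.map φ).mulVec t := by
        rw [← eq_neg_of_add_eq_zero_left hy, hΛ', Matrix.mulVec_mulVec, Matrix.mulVec_mulVec,
          ← Matrix.add_mulVec, ← Matrix.map_mul, ← Matrix.map_mul,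
          ← Matrix.map_add _ (map_add φ), h3, Matrix.map_one _ (map_zero φ) (map_one φ),
          Matrix.one_mulVec]
      have h4 : M.eRk (A ∪ Set.range y) ≤ M.eRk (A ∪ Set.range t) := by
        refine eRk_le_of_forall_mem_closureField ?_
        rintro x (hx | ⟨i, rfl⟩)
        · exact subset_closureField _ (Or.inl hx)
        · rw [hyt]
          exact add_mem
            (mulVec_mem_closureField Set.subset_union_left D₁ _
              (fun j => neg_mem (closureField_mono Set.subset_union_left (hb j))) i)
            (mulVec_mem_closureField Set.subset_union_left D₂ _
              (fun j => subset_closureField _ (Or.inr (Set.mem_range_self j))) i)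
      refine h4.trans ((M.eRk_union_le_eRk_add_encard _ _).trans ?_)
      gcongr
      rw [← Set.image_univ]
      exact (Set.encard_image_le t Set.univ).trans (by simp)
    rw [← hz] at hup
    refine hup.trans (eRk_le_of_forall_mem_closureField ?_)
    rintro x (hx | ⟨j, rfl⟩)
    · exact subset_closureField _ (Or.inl hx)
    · have hzC : z = (C.map φ).mulVec ((B.map φ).mulVec z) := by
        rw [Matrix.mulVec_mulVec, ← Matrix.map_mul, h2, Matrix.map_one _ (map_zero φ) (map_one φ),
          Matrix.one_mulVec]
      rw [congrFun hzC j]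
      exact mulVec_mem_closureField Set.subset_union_left C _
        (fun j => subset_closureField _ (Or.inr (Set.mem_range_self j))) j

/-! ### Multilinear maps in coordinates -/

section Coordinates

variable {K : Type*} [Field K] {d : ℕ} {ι : Fin d → Type*} [∀ i, Fintype (ι i)] {ω : Type*}

/-- The multilinear map over a commutative `K`-algebra `A` whose structure constants are the
elements `a g w` of `K`. -/
noncomputable def extMap (A : Type*) [CommRing A] [Algebra K A] (a : (∀ i, ι i) → ω → K) :
    MultilinearMap A (fun i : Fin d => ι i → A) (ω → A) :=
  ∑ g : ∀ i, ι i, ((MultilinearMap.mkPiAlgebra A (Fin d) A).compLinearMap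
    (fun i => LinearMap.proj (g i))).smulRight (fun w => algebraMap K A (a g w))

theorem extMap_apply {A : Type*} [CommRing A] [Algebra K A] (a : (∀ i, ι i) → ω → K)
    (z : ∀ i, ι i → A) (w : ω) :
    extMap A a z w = ∑ g : ∀ i, ι i, algebraMap K A (a g w) * ∏ i, z i (g i) := by
  simp [extMap, mul_comm]

theorem map_extMap {A B : Type*} [CommRing A] [Algebra K A] [CommRing B] [Algebra K B]
    (f : A →ₐ[K] B) (a : (∀ i, ι i) → ω → K) (z : ∀ i, ι i → A) (w : ω) :
    f (extMap A a z w) = extMap B a (fun i k => f (z i k)) w := by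
  simp [extMap_apply]

theorem extMap_mem_closureField {L : Type*} [Field L] [Algebra K L] (a : (∀ i, ι i) → ω → K)
    (A : Set L) (z : ∀ i, ι i → L) (hz : ∀ i k, z i k ∈ closureField K A) (w : ω) :
    extMap L a z w ∈ closureField K A := by
  rw [extMap_apply]
  exact sum_mem fun g _ => mul_mem (algebraMap_mem_closureField A _) (prod_mem fun i _ => hz i _)

/-- In coordinates, `F` is the multilinear map given by its structure constants. -/
theorem repr_apply_eq_extMap {V : Fin d → Type*} {W : Type*}
    [∀ i, AddCommGroup (V i)] [∀ i, Module K (V i)] [AddCommGroup W] [Module K W]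
    (F : MultilinearMap K V W) (b : ∀ i, Basis (ι i) K (V i)) (bW : Basis ω K W)
    (φ : ∀ i, ι i → K) (w : ω) :
    bW.coord w (F fun i => ∑ k, φ i k • b i k) =
      extMap K (fun g w => bW.coord w (F fun i => b i (g i))) φ w := by
  classical
  rw [F.map_sum, map_sum, extMap_apply]
  refine Finset.sum_congr rfl fun g _ => ?_
  rw [F.map_smul_univ (fun i => φ i (g i)) (fun i => b i (g i)), map_smul, smul_eq_mul, mul_comm]
  rfl

end Coordinates

/-! ### From a generic relation to a zero of large transcendence degree -/

theorem encard_range_le_natCard {κ L : Type*} [Finite κ] (f : κ → L) :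
    (Set.range f).encard ≤ Nat.card κ := by
  rw [← Set.image_univ]
  refine (Set.encard_image_le f Set.univ).trans ?_
  rw [Set.encard_univ, ENat.card_eq_coe_natCard]

/-- The set of all coordinates of an array of vectors. -/
def entries {L : Type*} {d r : ℕ} {ι : Fin d → Type*} (z : ∀ i, Fin r → ι i → L) : Set L :=
  {t | ∃ i j k, z i j k = t}

theorem finite_entries {L : Type*} {d r : ℕ} {ι : Fin d → Type*} [∀ i, Fintype (ι i)]
    (z : ∀ i, Fin r → ι i → L) : (entries z).Finite := by
  have : entries z = Set.range (fun p : Σ i, Fin r × ι i => z p.1 p.2.1 p.2.2) := by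
    ext t
    simp [entries]
  rw [this]
  exact Set.finite_range _

section Descent

variable {K L : Type*} [Field K] [Field L] [Algebra K L] {d r : ℕ} {ι : Fin d → Type*}
  [∀ i, Fintype (ι i)] {ω : Type*} [Fintype ω]

/-- A zero `x` of the relation `c` can be turned into a zero of its slice along `S` without losing
transcendence degree, once the coefficients `c` are adjoined; only the entries `(i, J₀ i)` with
`i ∈ S` are changed, one at a time. -/
theorem exists_slice_point (hL : (AlgebraicIndependent.matroid K L).eRank = ⊤)
    (a : (∀ i, ι i) → ω → K) (c : (Fin d → Fin r) → L) (J₀ : Fin d → Fin r)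
    (x : ∀ i, Fin r → ι i → L) (hx : sliceSum (extMap L a) c J₀ ∅ x = 0) (S : Finset (Fin d)) :
    ∃ z : ∀ i, Fin r → ι i → L, sliceSum (extMap L a) c J₀ S z = 0 ∧
      (AlgebraicIndependent.matroid K L).eRk (entries x) ≤
        (AlgebraicIndependent.matroid K L).eRk (Set.range c ∪ entries z) := by
  classical
  set M := AlgebraicIndependent.matroid K L
  induction S using Finset.induction_on with
  | empty => exact ⟨x, hx, M.eRk_mono Set.subset_union_right⟩
  | insert i S _ ih =>
    obtain ⟨z, hz, hrk⟩ := ih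
    -- the coordinates other than those of the entry `(i, J₀ i)`
    let A : Set L := Set.range c ∪
      {t | ∃ i' j k, ¬ (∃ h : i' = i, j = J₀ i) ∧ z i' j k = t}
    have hAsub : A ⊆ Set.range c ∪ entries z := by
      rintro t (ht | ⟨i', j, k, -, h⟩)
      · exact Or.inl ht
      · exact Or.inr ⟨i', j, k, h⟩
    have hAfin : A.Finite := ((Set.finite_range c).union (finite_entries z)).subset hAsub
    have hA : M.eRk A ≠ ⊤ :=
      ((M.eRk_le_encard A).trans_lt (Set.encard_lt_top_iff.2 hAfin)).ne
    have hcA : ∀ J, c J ∈ closureField K A :=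
      fun J => subset_closureField _ (Or.inl (Set.mem_range_self J))
    have hzA : ∀ i' j k, ¬ (∃ h : i' = i, j = J₀ i) → z i' j k ∈ closureField K A :=
      fun i' j k h => subset_closureField _ (Or.inr ⟨i', j, k, h, rfl⟩)
    have hself : setEntry z i (J₀ i) (z i (J₀ i)) = z := by simp [setEntry]
    rw [← hself, sliceSum_setEntry] at hz
    have hΛ : ∀ k w, sliceLin (extMap L a) c J₀ S i z (Pi.single k 1) w ∈ closureField K A := by
      intro k w
      rw [sliceLin, LinearMap.sum_apply, Finset.sum_apply]
      refine sum_mem fun J hJ => ?_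
      rw [LinearMap.smul_apply, Pi.smul_apply, smul_eq_mul, MultilinearMap.toLinearMap_apply]
      refine mul_mem (hcA J) (extMap_mem_closureField a A _ (fun i' k' => ?_) w)
      by_cases hi : i' = i
      · subst hi
        rw [Function.update_self, Pi.single_apply]
        split_ifs
        · exact one_mem _
        · exact zero_mem _
      · rw [Function.update_of_ne hi]
        exact hzA _ _ _ fun ⟨h, _⟩ => hi h
    have hb : ∀ w, sliceRem (extMap L a) c J₀ S i z w ∈ closureField K A := by
      intro w
      rw [sliceRem, Finset.sum_apply]
      refine sum_mem fun J hJ => ?_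
      rw [Pi.smul_apply, smul_eq_mul]
      refine mul_mem (hcA J) (extMap_mem_closureField a A _ (fun i' k' => hzA _ _ _ ?_) w)
      rintro ⟨rfl, hj⟩
      exact (Finset.mem_filter.1 hJ).2.2 hj
    obtain ⟨y', hy', hrk'⟩ := exists_homogeneous_point hL A hA
      (sliceLin (extMap L a) c J₀ S i z) hΛ (sliceRem (extMap L a) c J₀ S i z) hb _ hz
    · refine ⟨setEntry z i (J₀ i) y', ?_, hrk.trans ((M.eRk_mono ?_).trans
        (hrk'.trans (M.eRk_mono ?_)))⟩
      · rw [sliceSum_insert_setEntry, hy']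
      · rintro t (ht | ⟨i', j, k, rfl⟩)
        · exact Or.inl (Or.inl ht)
        · by_cases h : ∃ h : i' = i, j = J₀ i
          · obtain ⟨rfl, rfl⟩ := h
            exact Or.inr ⟨k, rfl⟩
          · exact Or.inl (Or.inr ⟨i', j, k, h, rfl⟩)
      · rintro t ((ht | ⟨i', j, k, h, rfl⟩) | ⟨k, rfl⟩)
        · exact Or.inl ht
        · refine Or.inr ⟨i', j, k, ?_⟩
          by_cases hi : i' = i
          · subst hi
            have hj : j ≠ J₀ i' := fun hj => h ⟨rfl, hj⟩
            simp [setEntry, hj]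
          · simp [setEntry, hi]
        · exact Or.inr ⟨i, J₀ i, k, by rw [setEntry_same]⟩

/-- If the `r ^ d` values of the generic array `x` are dependent, there is a zero `y` of the multilinear
map whose transcendence degree exceeds the number of coordinates minus `r ^ d`. -/
theorem exists_zero_of_relation (hL : (AlgebraicIndependent.matroid K L).eRank = ⊤)
    (a : (∀ i, ι i) → ω → K) (x : ∀ i, Fin r → ι i → L)
    (hxind : AlgebraicIndependent K fun p : Σ i, Fin r × ι i => x p.1 p.2.1 p.2.2)
    (hdep : ¬ LinearIndependent L fun J : Fin d → Fin r => extMap L a fun i => x i (J i)) :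
    ∃ y : ∀ i, ι i → L, extMap L a y = 0 ∧
      (Nat.card (Σ i, ι i) : ℕ∞) <
        (AlgebraicIndependent.matroid K L).eRk (Set.range fun p : Σ i, ι i => y p.1 p.2) +
          (r ^ d : ℕ) := by
  classical
  set M := AlgebraicIndependent.matroid K L
  rw [Fintype.not_linearIndependent_iff] at hdep
  obtain ⟨c', hc', J₀, hJ₀⟩ := hdep
  -- with `c J₀ = 1` only `r ^ d - 1` coefficients count, which makes the final inequality strict
  let c : (Fin d → Fin r) → L := fun J => (c' J₀)⁻¹ * c' J
  have hcJ₀ : c J₀ = 1 := inv_mul_cancel₀ hJ₀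
  have hc : sliceSum (extMap L a) c J₀ ∅ x = 0 := by
    simp only [sliceSum_empty, c, mul_smul]
    rw [← Finset.smul_sum, hc', smul_zero]
  obtain ⟨z, hz, hrk⟩ := exists_slice_point hL a c J₀ x hc Finset.univ
  rw [sliceSum_univ, hcJ₀, one_smul] at hz
  refine ⟨fun i => z i (J₀ i), hz, ?_⟩
  set y : Set L := Set.range fun p : Σ i, ι i => z p.1 (J₀ p.1) p.2
  let σ := Σ i, Fin r × ι i
  let Oth := {p : σ // ¬ p.2.1 = J₀ p.1}
  let oth : Set L := Set.range fun p : Oth => z p.1.1 p.1.2.1 p.1.2.2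
  let Cs := {J : Fin d → Fin r // ¬ J = J₀}
  let cs : Set L := Set.range fun J : Cs => c J
  have hx : M.eRk (entries x) = Nat.card σ := by
    have h1 : entries x = Set.range (fun p : σ => x p.1 p.2.1 p.2.2) := by
      ext t
      simp [entries, σ]
    have h2 : M.Indep (entries x) := by
      rw [h1]
      exact AlgebraicIndependent.matroid_indep_iff.2 hxind.coe_range
    rw [h2.eRk_eq_encard, h1, ← ENat.card_coe_set_eq,
      ENat.card_congr (Equiv.ofInjective _ hxind.injective).symm, ENat.card_eq_coe_natCard]
  have hsplit : M.eRk (Set.range c ∪ entries z) ≤ M.eRk (y ∪ oth ∪ cs) := by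
    refine eRk_le_of_forall_mem_closureField ?_
    rintro t (⟨J, rfl⟩ | ⟨i, j, k, rfl⟩)
    · by_cases hJ : J = J₀
      · rw [hJ, hcJ₀]
        exact one_mem _
      · exact subset_closureField _ (Or.inr ⟨⟨J, hJ⟩, rfl⟩)
    · refine subset_closureField _ (Or.inl ?_)
      by_cases hj : j = J₀ i
      · exact Or.inl ⟨⟨i, k⟩, by rw [hj]⟩
      · exact Or.inr ⟨⟨⟨i, j, k⟩, hj⟩, rfl⟩
  have hσ : Nat.card σ = Nat.card (Σ i, ι i) + Nat.card Oth := by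
    rw [← Nat.card_sum]
    refine Nat.card_congr ((Equiv.sumCompl fun p : σ => p.2.1 = J₀ p.1).symm.trans
      (Equiv.sumCongr ?_ (Equiv.refl _)))
    refine ⟨fun p => ⟨p.1.1, p.1.2.2⟩, fun q => ⟨⟨q.1, J₀ q.1, q.2⟩, rfl⟩, ?_, fun _ => rfl⟩
    rintro ⟨⟨i, j, k⟩, h⟩
    refine Subtype.ext ?_
    change (⟨i, J₀ i, k⟩ : σ) = ⟨i, j, k⟩
    rw [show j = J₀ i from h]
  have hCs : Nat.card Cs + 1 = r ^ d := by
    have h1 : Nat.card (Fin d → Fin r) = r ^ d := by simp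
    rw [← h1, ← Nat.card_congr (Equiv.sumCompl fun J => J = J₀), Nat.card_sum, add_comm]
    simp [Cs]
  have hfin : M.eRk y ≠ ⊤ :=
    ((M.eRk_le_encard y).trans_lt (Set.encard_lt_top_iff.2 (Set.finite_range _))).ne
  have hmain : (Nat.card σ : ℕ∞) ≤ M.eRk y + Nat.card Oth + Nat.card Cs := by
    rw [← hx]
    refine hrk.trans (hsplit.trans ((M.eRk_union_le_eRk_add_encard _ _).trans
      (add_le_add ((M.eRk_union_le_eRk_add_encard _ _).trans (add_le_add le_rfl ?_)) ?_)))
    · exact encard_range_le_natCard _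
    · exact encard_range_le_natCard _
  obtain ⟨n, hn⟩ := ENat.ne_top_iff_exists.1 hfin
  rw [← hn] at hmain ⊢
  norm_cast at hmain ⊢
  omega

end Descent

/-! ### Specialising generic vectors -/

/-- Linear independence over the fraction field of `R` survives under some `K`-point of `R`, as soon
as the `K`-points of `R` detect nonzero elements: a left inverse of the matrix of the family,
multiplied by a common denominator `s`, specialises well at every point where `s` does not vanish. -/
theorem exists_specialise {K R L κ ω : Type*} [Field K] [CommRing R] [Algebra K R]
    [Field L] [Algebra R L] [IsFractionRing R L] [Finite κ] [Fintype ω]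
    (hR : ∀ s : R, s ≠ 0 → ∃ φ : R →ₐ[K] K, φ s ≠ 0) (u : κ → ω → R)
    (hu : LinearIndependent L fun J w => algebraMap R L (u J w)) :
    ∃ φ : R →ₐ[K] K, LinearIndependent K fun J w => φ (u J w) := by
  classical
  have := Fintype.ofFinite κ
  have hinj : Function.Injective (algebraMap R L) := IsFractionRing.injective R L
  obtain ⟨g, hg⟩ := (Fintype.linearCombination L fun J w => algebraMap R L (u J w)
    ).exists_leftInverse_of_injective
      (LinearMap.ker_eq_bot.2 (linearIndependent_iff_injective_fintypeLinearCombination.1 hu))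
  obtain ⟨s, hs⟩ := IsLocalization.exist_integer_multiples_of_finite (nonZeroDivisors R)
    fun p : ω × κ => g (Pi.single p.1 1) p.2
  choose num hnum using hs
  have hgu : ∀ J J', ∑ w, algebraMap R L (u J w) * g (Pi.single w 1) J' =
      if J = J' then 1 else 0 := by
    intro J J'
    have h1 := congrFun (LinearMap.congr_fun hg (Pi.single J 1)) J'
    rw [LinearMap.comp_apply, Fintype.linearCombination_apply_single, one_smul,
      pi_eq_sum_univ' fun w => algebraMap R L (u J w), map_sum, Finset.sum_apply] at h1
    simp_rw [map_smul, Pi.smul_apply, smul_eq_mul] at h1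
    rw [LinearMap.id_apply, Pi.single_apply] at h1
    simp_rw [eq_comm (a := J)]
    rw [← h1]
  have hR' : ∀ J J', ∑ w, u J w * num (w, J') = if J = J' then (s : R) else 0 := by
    intro J J'
    apply hinj
    rw [map_sum]
    simp_rw [map_mul, hnum, Algebra.smul_def, mul_left_comm _ (algebraMap R L s)]
    rw [← Finset.mul_sum, hgu]
    split_ifs <;> simp
  have : Nontrivial R := (algebraMap R L).domain_nontrivial
  obtain ⟨φ, hφ⟩ := hR s (nonZeroDivisors.ne_zero s.2)
  refine ⟨φ, Fintype.linearIndependent_iff.2 fun c hc J' => ?_⟩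
  have h2 : ∑ J, c J * ∑ w, φ (u J w) * φ (num (w, J')) = 0 := by
    simp_rw [Finset.mul_sum, ← mul_assoc]
    rw [Finset.sum_comm]
    refine Finset.sum_eq_zero fun w _ => ?_
    rw [← Finset.sum_mul]
    have := congrFun hc w
    simp only [Finset.sum_apply, Pi.smul_apply, smul_eq_mul, Pi.zero_apply] at this
    rw [this, zero_mul]
  have h3 : ∀ J, ∑ w, φ (u J w) * φ (num (w, J')) = if J = J' then φ s else 0 := by
    intro J
    simp_rw [← map_mul]
    rw [← map_sum, hR']
    split_ifs <;> simp
  simp_rw [h3] at h2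
  simpa [hφ] using h2

/-! ### The bound over infinite fields -/

/-- The bound `GR(T_F) < (β(F) + 1) ^ d` over an infinite field. -/
theorem geomRank_lt {K : Type} [Field K] [Infinite K] {d : ℕ} (hd : 0 < d)
    {V : Fin d → Type} {W : Type}
    [∀ i, AddCommGroup (V i)] [∀ i, Module K (V i)] [∀ i, FiniteDimensional K (V i)]
    [AddCommGroup W] [Module K W] [FiniteDimensional K W] (F : MultilinearMap K V W) :
    mapGeomRank F < (((compIndex F + 1) ^ d : ℕ) : ℕ∞) := by
  classical
  let r := compIndex F + 1
  let ι : Fin d → Type := fun i => Module.Free.ChooseBasisIndex K (V i)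
  let ω := Module.Free.ChooseBasisIndex K W
  let b : ∀ i, Basis (ι i) K (V i) := fun i => Module.Free.chooseBasis K (V i)
  let bW : Basis ω K W := Module.Free.chooseBasis K W
  let a : (∀ i, ι i) → ω → K := fun g w => bW.coord w (F fun i => b i (g i))
  let σ := Σ i, Fin r × ι i
  -- the countably many extra variables make the transcendence degree of `L` over `K` infinite
  let R := MvPolynomial (σ ⊕ ℕ) K
  let L := FractionRing R
  have hinj : Function.Injective (algebraMap R L) := IsFractionRing.injective R L
  have hXind : AlgebraicIndependent K fun s : σ ⊕ ℕ => algebraMap R L (MvPolynomial.X s) :=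
    (MvPolynomial.algebraicIndependent_X (σ ⊕ ℕ) K).map' (f := IsScalarTower.toAlgHom K R L) hinj
  have hL : (AlgebraicIndependent.matroid K L).eRank = ⊤ := by
    have h1 := AlgebraicIndependent.matroid_indep_iff.2 (hXind.comp _ Sum.inr_injective).coe_range
    refine top_le_iff.1 (le_trans ?_ h1.encard_le_eRank)
    rw [top_le_iff, Set.encard_eq_top_iff]
    exact Set.infinite_range_of_injective (hXind.comp _ Sum.inr_injective).injective
  let x : ∀ i, Fin r → ι i → R := fun i j k => MvPolynomial.X (Sum.inl ⟨i, j, k⟩)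
  have hdep : ¬ LinearIndependent L
      fun J : Fin d → Fin r => extMap L a fun i k => algebraMap R L (x i (J i) k) := by
    intro hind
    have hpt : ∀ s : R, s ≠ 0 → ∃ φ : R →ₐ[K] K, φ s ≠ 0 := by
      intro s hs
      by_contra! h
      refine hs (MvPolynomial.funext fun t => ?_)
      have := h (MvPolynomial.aeval t)
      rw [map_zero, ← this]
      exact (congrArg (fun f : R →+* K => f s) (MvPolynomial.coe_aeval_eq_eval t)).symm
    have hR : (fun (J : Fin d → Fin r) w => algebraMap R L (extMap R a (fun i => x i (J i)) w)) =
        fun J => extMap L a fun i k => algebraMap R L (x i (J i) k) :=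
      funext₂ fun J w => map_extMap (IsScalarTower.toAlgHom K R L) a _ w
    obtain ⟨φ, hφ⟩ := exists_specialise (L := L) hpt
      (fun (J : Fin d → Fin r) => extMap R a fun i => x i (J i)) (by
        rw [hR]
        exact hind)
    have hK : (LinearMap.pi fun w => bW.coord w) ∘
        (fun J : Fin d → Fin r => F fun i => ∑ k, φ (x i (J i) k) • b i k) =
        fun J w => φ (extMap R a (fun i => x i (J i)) w) := by
      funext J w
      rw [map_extMap φ]
      exact repr_apply_eq_extMap F b bW (fun i k => φ (x i (J i) k)) w
    have hr := le_compIndex hd F (fun i (j : Fin r) => ∑ k, φ (x i j k) • b i k) (by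
      refine LinearIndependent.of_comp (LinearMap.pi fun w => bW.coord w) ?_
      rw [hK]
      exact hφ)
    exact Nat.not_succ_le_self _ hr
  obtain ⟨y, hy, hlt⟩ := exists_zero_of_relation hL a (fun i j k => algebraMap R L (x i j k))
    (hXind.comp _ Sum.inl_injective) hdep
  let τ := Σ i, ι i
  let ev : MvPolynomial τ K →ₐ[K] L := MvPolynomial.aeval fun p : τ => y p.1 p.2
  have hprime : (RingHom.ker ev).IsPrime := RingHom.ker_isPrime _
  have hle : mapGeomRank F ≤ (RingHom.ker ev).height := by
    rw [PrimeSpectrum.height_eq_orderHeight ⟨RingHom.ker ev, hprime⟩]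
    refine iInf₂_le _ ?_
    refine Ideal.span_le.2 ?_
    rintro _ ⟨w, rfl⟩
    have h1 := map_extMap ev a (fun i k => MvPolynomial.X ⟨i, k⟩) w
    rw [extMap_apply] at h1
    refine RingHom.mem_ker.2 (h1.trans ?_)
    simp only [ev, MvPolynomial.aeval_X]
    exact congrFun hy w
  have hsum := height_ker_aeval_add_eRk_le (K := K) (fun p : τ => y p.1 p.2)
  have hfin := ne_top_of_le_ne_top (ENat.natCast_ne_top _) (le_add_self.trans hsum)
  refine hle.trans_lt ?_
  have h2 := hsum.trans_lt hlt
  rw [add_comm] at h2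
  exact lt_of_add_lt_add_left h2

/-- **Bounds on the completeness index, general case.**  Let `F : V₁ × ⋯ × V_d → W` be a
nonzero multilinear map between finite-dimensional vector spaces over a field `K`.  If `K` is
infinite then `GR(T_F) < (β(F)+1)^d`, and if `K` is finite with `q` elements then
`AR(T_F) < d + (β(F)+1)^d + ⌈(β(F)+1)^d (d-1)/(q-1)⌉`. -/
theorem completeness_index_bound_general {K : Type} [Field K] {d : ℕ} (hd : 0 < d)
    (V : Fin d → Type) (W : Type)
    [∀ i, AddCommGroup (V i)] [∀ i, Module K (V i)] [∀ i, FiniteDimensional K (V i)]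
    [AddCommGroup W] [Module K W] [FiniteDimensional K W]
    (F : MultilinearMap K V W) (hF : F ≠ 0) :
    (Infinite K → mapGeomRank F < (((compIndex F + 1) ^ d : ℕ) : ℕ∞)) ∧
    (Finite K → mapAnalyticRank F <
      (d : ℝ) + (compIndex F + 1) ^ d +
        ⌈(((compIndex F + 1) ^ d * (d - 1) : ℕ) : ℝ) / ((Nat.card K : ℝ) - 1)⌉) := by
  refine ⟨fun _ => geomRank_lt hd F, fun _ => (analyticRank_lt hd F).trans_le ?_⟩
  have hq : (1 : ℝ) < Nat.card K := by exact_mod_cast Finite.one_lt_card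
  have hceil : (0 : ℝ) ≤
      ⌈(((compIndex F + 1) ^ d * (d - 1) : ℕ) : ℝ) / ((Nat.card K : ℝ) - 1)⌉ := by
    exact_mod_cast Int.ceil_nonneg (div_nonneg (Nat.cast_nonneg _) (sub_nonneg.2 hq.le))
  have hd' : (0 : ℝ) ≤ d := Nat.cast_nonneg d
  push_cast at hceil ⊢
  linarith
end
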